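/- Let d ≥ 1 be an integer, let C₁ > 0 and 1 ≤ p < ∞. Then there exists a constant ε₀ > 0, depending only on C₁, p and d, such that the following holds: for every measurable function f : ℝ^d → ℝ satisfying 0 ≤ f(x) ≤ f(0) for every x ∈ ℝ^d and ‖f‖_{L^p(ℝ^d)} ≤ C₁ · f(0) < ∞, one has ∫_{ℝ^d} K_d(y) (f(0) − f(y)) dy ≥ ε₀ · f(0). -/

import Mathlib

open MeasureTheory Real Set

/-- The Bessel kernel `K_d`, convolution kernel of `(1-Δ)⁻¹` on `ℝ^d`. -/
noncomputable def besselKernel (d : ℕ) (x : EuclideanSpace ℝ (Fin d)) : ℝ :=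
  ∫ s in Set.Ioi (0:ℝ),
    Real.exp (-s) * (4 * Real.pi * s) ^ (-(d:ℝ)/2) * Real.exp (-‖x‖^2 / (4*s))

/-!
The only properties of the kernel that matter are that it is integrable and almost everywhere
positive, and the only property of `ℝ^d` that its volume is infinite. By Markov's inequality
`{f ≥ f(0)/2}` has measure at most `(2 C₁)^p`, whereas the superlevel sets `{K > c}` exhaust a set
of infinite measure as `c → 0`. So for a small enough `c`, depending only on `C₁`, `p` and `d`,
the set where both `K > c` and `f < f(0)/2` has measure at least one, and the integrand is at least
`c f(0)/2` there. The Bessel kernel is integrable and positive because it is the average of the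
Gaussian heat kernels over times `s` with density `e^{-s}`.
-/

open scoped ENNReal NNReal

section WeightedDeficit

variable {X : Type*} [MeasurableSpace X] {μ : Measure X}

lemma measure_le_enorm_le_rpow_of_eLpNorm_le {E : Type*} [NormedAddCommGroup E] {f : X → E}
    (hf : AEStronglyMeasurable f μ) {p : ℝ≥0∞} (hp_ne_zero : p ≠ 0) (hp_ne_top : p ≠ ∞)
    {a C : ℝ≥0∞} (ha_ne_zero : a ≠ 0) (ha_ne_top : a ≠ ∞) (hfC : eLpNorm f p μ ≤ C * a) :
    μ {x | a ≤ ‖f x‖ₑ} ≤ C ^ p.toReal :=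
  calc μ {x | a ≤ ‖f x‖ₑ}
      ≤ a⁻¹ ^ p.toReal * eLpNorm f p μ ^ p.toReal :=
        meas_ge_le_mul_pow_eLpNorm_enorm μ hp_ne_zero hp_ne_top hf ha_ne_zero
          fun h => absurd h ha_ne_top
    _ ≤ a⁻¹ ^ p.toReal * (C * a) ^ p.toReal := by gcongr
    _ = C ^ p.toReal := by
        rw [← ENNReal.mul_rpow_of_nonneg _ _ ENNReal.toReal_nonneg, mul_left_comm,
          ENNReal.inv_mul_cancel ha_ne_zero ha_ne_top, mul_one]

lemma exists_pos_lt_measure_setOf_lt {K : X → ℝ} (hK : ∀ᵐ x ∂μ, 0 < K x) {m : ℝ≥0∞}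
    (hm : m < μ univ) : ∃ c : ℝ, 0 < c ∧ m < μ {x | c < K x} := by
  have superlevel_mono : Monotone fun n : ℕ => {x | 1 / ((n : ℝ) + 1) < K x} :=
    fun _ _ hnk x (hx : _ < K x) => (Nat.one_div_le_one_div hnk).trans_lt hx
  have iUnion_ae_univ : (⋃ n : ℕ, {x | 1 / ((n : ℝ) + 1) < K x}) =ᵐ[μ] univ := by
    rw [Filter.eventuallyEq_univ]
    filter_upwards [hK] with x hx using mem_iUnion.2 (exists_nat_one_div_lt hx)
  have tendsto_superlevel := tendsto_measure_iUnion_atTop (μ := μ) superlevel_mono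
  rw [measure_congr iUnion_ae_univ] at tendsto_superlevel
  obtain ⟨n, hn⟩ := (tendsto_superlevel.eventually_const_lt hm).exists
  exact ⟨1 / ((n : ℝ) + 1), Nat.one_div_pos_of_nat, hn⟩

lemma le_integral_of_one_le_measure {g : X → ℝ} (hg : Integrable g μ) (hg_nonneg : 0 ≤ᵐ[μ] g)
    {a : ℝ} (ha : 0 < a) (hμ : 1 ≤ μ {x | a ≤ g x}) : a ≤ ∫ x, g x ∂μ := by
  have one_le_real : 1 ≤ μ.real {x | a ≤ g x} :=
    ENNReal.toReal_mono (hg.measure_ge_lt_top ha).ne hμ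
  exact (le_mul_of_one_le_right ha.le one_le_real).trans
    (mul_meas_ge_le_integral_of_nonneg hg_nonneg hg a)

lemma ae_nonneg_mul_sub {K f : X → ℝ} {M : ℝ} (hK_nonneg : 0 ≤ᵐ[μ] K)
    (hfM : ∀ᵐ x ∂μ, f x ≤ M) : 0 ≤ᵐ[μ] fun x => K x * (M - f x) := by
  filter_upwards [hK_nonneg, hfM] with x hKx hx using mul_nonneg hKx (sub_nonneg.2 hx)

lemma mul_half_le_integral_mul_sub {K f : X → ℝ} (hK : Integrable K μ) (hK_nonneg : 0 ≤ᵐ[μ] K)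
    (hf : AEStronglyMeasurable f μ) {M c : ℝ} (hM : 0 < M) (hfM : ∀ᵐ x ∂μ, |f x| ≤ M) (hc : 0 < c)
    (hμ : 1 ≤ μ ({x | c < K x} \ {x | M / 2 ≤ |f x|})) :
    c * (M / 2) ≤ ∫ x, K x * (M - f x) ∂μ := by
  have deficit_bdd : ∀ᵐ x ∂μ, ‖M - f x‖ ≤ 2 * M := by
    filter_upwards [hfM] with x hx
    rw [Real.norm_eq_abs, abs_le]
    constructor <;> linarith [abs_le.1 hx]
  have integrable_mul_sub : Integrable (fun x => K x * (M - f x)) μ :=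
    hK.mul_bdd (aestronglyMeasurable_const.sub hf) deficit_bdd
  refine le_integral_of_one_le_measure integrable_mul_sub
    (ae_nonneg_mul_sub hK_nonneg (hfM.mono fun _ => le_of_abs_le)) (by positivity)
    (hμ.trans (measure_mono ?_))
  rintro x ⟨hcK : c < K x, hfx : ¬M / 2 ≤ |f x|⟩
  have half_le : M / 2 ≤ M - f x := by linarith [le_abs_self (f x)]
  exact mul_le_mul hcK.le half_le (by positivity) (hc.trans hcK).le

theorem exists_pos_mul_le_integral_mul_sub (hμ : μ univ = ∞) {K : X → ℝ} (hK : Integrable K μ)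
    (hK_pos : ∀ᵐ x ∂μ, 0 < K x) {p : ℝ≥0∞} (hp_ne_zero : p ≠ 0) (hp_ne_top : p ≠ ∞) (C : ℝ≥0) :
    ∃ ε : ℝ, 0 < ε ∧ ∀ (f : X → ℝ) (M : ℝ), AEStronglyMeasurable f μ → (∀ᵐ x ∂μ, |f x| ≤ M) →
      eLpNorm f p μ ≤ C * ENNReal.ofReal M → ε * M ≤ ∫ x, K x * (M - f x) ∂μ := by
  have hK_nonneg : 0 ≤ᵐ[μ] K := hK_pos.mono fun _ => le_of_lt
  have markov_bound_ne_top : ((C : ℝ≥0∞) * 2) ^ p.toReal ≠ ∞ := by finiteness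
  obtain ⟨c, hc, hcK⟩ := exists_pos_lt_measure_setOf_lt hK_pos
    (m := ((C : ℝ≥0∞) * 2) ^ p.toReal + 1) (hμ ▸ by finiteness)
  refine ⟨c / 2, by positivity, fun f M hf hfM hfC => ?_⟩
  have : (ae μ).NeBot := ae_neBot.2 fun h => by simp [h] at hμ
  obtain ⟨x₀, hx₀⟩ := hfM.exists
  obtain rfl | hM := ((abs_nonneg _).trans hx₀).eq_or_lt
  · rw [mul_zero]
    exact integral_nonneg_of_ae (ae_nonneg_mul_sub hK_nonneg (hfM.mono fun _ => le_of_abs_le))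
  have large_set_le : μ {x | M / 2 ≤ |f x|} ≤ ((C : ℝ≥0∞) * 2) ^ p.toReal := by
    have hfC' : eLpNorm f p μ ≤ C * 2 * ENNReal.ofReal (M / 2) := by
      rwa [mul_assoc, ← ENNReal.ofReal_ofNat, ← ENNReal.ofReal_mul zero_le_two,
        mul_div_cancel₀ M two_ne_zero]
    have := measure_le_enorm_le_rpow_of_eLpNorm_le hf hp_ne_zero hp_ne_top
      (ENNReal.ofReal_pos.2 (half_pos hM)).ne' ENNReal.ofReal_ne_top hfC'
    simpa only [Real.enorm_eq_ofReal_abs, ENNReal.ofReal_le_ofReal_iff (abs_nonneg _)] using this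
  have one_le_diff : 1 ≤ μ ({x | c < K x} \ {x | M / 2 ≤ |f x|}) :=
    calc 1 ≤ μ {x | c < K x} - μ {x | M / 2 ≤ |f x|} :=
          ENNReal.le_sub_of_add_le_left (ne_top_of_le_ne_top markov_bound_ne_top large_set_le)
            ((add_le_add_left large_set_le 1).trans hcK.le)
      _ ≤ _ := le_measure_sdiff
  calc c / 2 * M = c * (M / 2) := by ring
    _ ≤ _ := mul_half_le_integral_mul_sub hK hK_nonneg hf hM hfM hc one_le_diff

end WeightedDeficit

section HeatKernel

variable {V : Type*} [NormedAddCommGroup V] [InnerProductSpace ℝ V]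

/-- The Gaussian heat kernel of `∂ₛ - Δ` on the Euclidean space `V` at time `s`. It is meaningful
only for `0 < s`. -/
noncomputable def heatKernel (s : ℝ) (x : V) : ℝ :=
  (4 * π * s) ^ (-(Module.finrank ℝ V : ℝ) / 2) * exp (-‖x‖ ^ 2 / (4 * s))

lemma heatKernel_pos {s : ℝ} (hs : 0 < s) (x : V) : 0 < heatKernel s x := by
  unfold heatKernel
  positivity

variable [MeasurableSpace V] [BorelSpace V]

lemma measurable_heatKernel : Measurable fun z : V × ℝ => heatKernel z.2 z.1 := by
  unfold heatKernel
  fun_prop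

variable [FiniteDimensional ℝ V]

lemma integral_heatKernel {s : ℝ} (hs : 0 < s) : ∫ x : V, heatKernel s x = 1 := by
  have hexp (x : V) : -‖x‖ ^ 2 / (4 * s) = -(1 / (4 * s)) * ‖x‖ ^ 2 := by ring
  have hbase : π / (1 / (4 * s)) = 4 * π * s := by field_simp
  simp only [heatKernel, hexp]
  rw [integral_const_mul, GaussianFourier.integral_rexp_neg_mul_sq_norm (by positivity), hbase,
    ← Real.rpow_add (by positivity), neg_div, neg_add_cancel, Real.rpow_zero]

lemma integrable_heatKernel {s : ℝ} (hs : 0 < s) : Integrable fun x : V => heatKernel s x :=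
  .of_integral_ne_zero ((integral_heatKernel hs).trans_ne one_ne_zero)

lemma integrable_exp_neg_mul_heatKernel :
    Integrable (fun z : V × ℝ => exp (-z.2) * heatKernel z.2 z.1)
      (volume.prod (volume.restrict (Ioi 0))) := by
  have hmeas : Measurable fun z : V × ℝ => exp (-z.2) * heatKernel z.2 z.1 :=
    (by fun_prop : Measurable fun z : V × ℝ => exp (-z.2)).mul measurable_heatKernel
  rw [integrable_prod_iff' hmeas.aestronglyMeasurable]
  refine ⟨?_, (integrableOn_exp_neg_Ioi 0).congr_fun (fun s hs => ?_) measurableSet_Ioi⟩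
  · filter_upwards [ae_restrict_mem measurableSet_Ioi] with s hs
    exact (integrable_heatKernel hs).const_mul _
  · have norm_eq (x : V) : ‖exp (-s) * heatKernel s x‖ = exp (-s) * heatKernel s x :=
      Real.norm_of_nonneg (mul_pos (exp_pos _) (heatKernel_pos hs x)).le
    simp only [norm_eq, integral_const_mul, integral_heatKernel hs, mul_one]

end HeatKernel

section BesselKernel

variable (d : ℕ)

lemma besselKernel_eq_integral_heatKernel (x : EuclideanSpace ℝ (Fin d)) :
    besselKernel d x = ∫ s in Ioi (0 : ℝ), exp (-s) * heatKernel s x := by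
  simp only [besselKernel, heatKernel, finrank_euclideanSpace_fin, mul_assoc]

lemma integrable_besselKernel : Integrable (besselKernel d) := by
  rw [funext (besselKernel_eq_integral_heatKernel d)]
  exact integrable_exp_neg_mul_heatKernel.integral_prod_left

-- Positivity fails at the origin when `2 ≤ d`: the defining integral diverges, so its value is `0`.
lemma ae_besselKernel_pos : ∀ᵐ x, 0 < besselKernel d x := by
  filter_upwards [integrable_exp_neg_mul_heatKernel.prod_right_ae] with x hx
  have integrand_pos : ∀ s ∈ Ioi (0 : ℝ), 0 < exp (-s) * heatKernel s x :=
    fun s hs => mul_pos (exp_pos _) (heatKernel_pos hs x)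
  have integrand_nonneg :
      0 ≤ᵐ[volume.restrict (Ioi 0)] fun s => exp (-s) * heatKernel s x := by
    filter_upwards [ae_restrict_mem measurableSet_Ioi] with s hs using (integrand_pos s hs).le
  rw [besselKernel_eq_integral_heatKernel,
    setIntegral_pos_iff_support_of_nonneg_ae integrand_nonneg hx,
    inter_eq_right.2 fun s hs => Function.mem_support.2 (integrand_pos s hs).ne']
  simp only [Real.volume_Ioi, ENNReal.zero_lt_top]

end BesselKernel

theorem stmt_0_general {d : ℕ} (hd : 1 ≤ d) {p : ℝ≥0∞} (hp_ne_zero : p ≠ 0) (hp_ne_top : p ≠ ∞)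
    (C : ℝ≥0) :
    ∃ ε₀ : ℝ, 0 < ε₀ ∧ ∀ (f : EuclideanSpace ℝ (Fin d) → ℝ) (M : ℝ),
      AEStronglyMeasurable f volume → (∀ᵐ x, |f x| ≤ M) →
      eLpNorm f p volume ≤ C * ENNReal.ofReal M →
      ε₀ * M ≤ ∫ y, besselKernel d y * (M - f y) := by
  have : Nonempty (Fin d) := ⟨⟨0, hd⟩⟩
  exact exists_pos_mul_le_integral_mul_sub (measure_univ_of_isAddLeftInvariant volume)
    (integrable_besselKernel d) (ae_besselKernel_pos d) hp_ne_zero hp_ne_top C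

/-- the fractional Poincaré-type lemma (Lemma `lem100`). -/
theorem stmt_0 (d : ℕ) (hd : 1 ≤ d) (C₁ : ℝ) (hC₁ : 0 < C₁) (p : ℝ) (hp : 1 ≤ p) :
    ∃ ε₀ : ℝ, 0 < ε₀ ∧
      ∀ f : EuclideanSpace ℝ (Fin d) → ℝ, Measurable f →
        (∀ x, 0 ≤ f x ∧ f x ≤ f 0) →
        eLpNorm f (ENNReal.ofReal p) volume ≤ ENNReal.ofReal (C₁ * f 0) →
        ε₀ * f 0 ≤ ∫ y, besselKernel d y * (f 0 - f y) := by
  obtain ⟨ε₀, hε₀, hbound⟩ := stmt_0_general hd (p := ENNReal.ofReal p)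
    (ENNReal.ofReal_pos.2 (one_pos.trans_le hp)).ne' ENNReal.ofReal_ne_top C₁.toNNReal
  exact ⟨ε₀, hε₀, fun f hf hf_mem hfC => hbound f (f 0) hf.aestronglyMeasurable
    (.of_forall fun x => (abs_of_nonneg (hf_mem x).1).trans_le (hf_mem x).2)
    (hfC.trans_eq (ENNReal.ofReal_mul hC₁.le))⟩
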